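/- For n ≥ 4, the 2-cocycle c represents a non-trivial class in H²(S_n, Z/2Z): there is no function f : S_n → Z/2Z such that c(x,y) = f(x) + f(y) + f(x·y) for all x, y ∈ S_n. -/

import Mathlib

open Equiv
open scoped Classical

/-- Generator `z` as an element of the free group. -/
def zF (n : ℕ) : FreeGroup (Fin (n-1) ⊕ Unit) := FreeGroup.of (Sum.inr ())

/-- Generator `τ̃ᵢ` as an element of the free group. -/
def tF (n : ℕ) (i : Fin (n-1)) : FreeGroup (Fin (n-1) ⊕ Unit) := FreeGroup.of (Sum.inl i)

/-- Relations of the spin extension of the symmetric group. -/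
def spinRels (n : ℕ) : Set (FreeGroup (Fin (n-1) ⊕ Unit)) :=
  {zF n * zF n} ∪
  {w | ∃ i : Fin (n-1), w = zF n * tF n i * (tF n i * zF n)⁻¹} ∪
  {w | ∃ i : Fin (n-1), w = tF n i * tF n i * (zF n)⁻¹} ∪
  {w | ∃ i j : Fin (n-1), 1 < |(i : ℤ) - (j : ℤ)| ∧ w = tF n i * tF n j * (zF n * tF n j * tF n i)⁻¹} ∪
  {w | ∃ i j : Fin (n-1), (j : ℕ) = (i : ℕ) + 1 ∧
        w = tF n i * tF n j * tF n i * (tF n j * tF n i * tF n j)⁻¹}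

/-- The spin extension `S̃ₙ` of the symmetric group, as a presented group. -/
abbrev SpinSym (n : ℕ) := PresentedGroup (spinRels n)

/-- The central element `z` of `S̃ₙ`. -/
def zt (n : ℕ) : SpinSym n := PresentedGroup.of (Sum.inr ())

/-- The generator `τ̃ᵢ` of `S̃ₙ`. -/
def tt (n : ℕ) (i : Fin (n-1)) : SpinSym n := PresentedGroup.of (Sum.inl i)

/-- `i` as an element of `Fin n`. -/
def finL (n : ℕ) (i : Fin (n-1)) : Fin n := ⟨i, by have := i.2; omega⟩

/-- `i+1` as an element of `Fin n`. -/
def finR (n : ℕ) (i : Fin (n-1)) : Fin n := ⟨(i : ℕ) + 1, by have := i.2; omega⟩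

/-- `τ̃ₖ` for a natural number index, `1` out of range. -/
def ttN (n : ℕ) (k : ℕ) : SpinSym n := if h : k < n - 1 then tt n ⟨k, h⟩ else 1

/-- For `i ≤ j`, the word `τ̃ᵢ·τ̃ᵢ₊₁⋯τ̃ⱼ₋₂·τ̃ⱼ₋₁·τ̃ⱼ₋₂⋯τ̃ᵢ₊₁·τ̃ᵢ` (equal to `1` when `i = j`). -/
def ttilCore (n i j : ℕ) : SpinSym n :=
  (((List.range' i (j - i)) ++ (List.range' i (j - 1 - i)).reverse).map (ttN n)).prod

/-- The lifted transpositions `τ̃_{i,j}`, with `τ̃_{j,i} = z·τ̃_{i,j}` for `i < j`,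
and `τ̃_{k,k} = 1`. -/
def ttil (n i j : ℕ) : SpinSym n := if j < i then zt n * ttilCore n j i else ttilCore n i j

/-- `i` is the sequence of indices of a factorization of `x` as a product of
transpositions `t_{i_0,0} ⋯ t_{i_{n-1},n-1}` with `i_k ≤ k`. -/
def IsFactorization (n : ℕ) (x : Equiv.Perm (Fin n)) (i : Fin n → Fin n) : Prop :=
  (∀ k, i k ≤ k) ∧ x = ((List.finRange n).map (fun k => Equiv.swap (i k) k)).prod

/-- The section `s : Sₙ → S̃ₙ`, defined from the unique factorization
`x = t_{i_0,0} ⋯ t_{i_{n-1},n-1}` by `s x = τ̃_{i_0,0} ⋯ τ̃_{i_{n-1},n-1}`. -/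
noncomputable def sec (n : ℕ) (x : Equiv.Perm (Fin n)) : SpinSym n :=
  if h : ∃ i, IsFactorization n x i then
    ((List.finRange n).map (fun k => ttil n (h.choose k).val k.val)).prod
  else 1

/-- The `2`-cocycle `c : Sₙ × Sₙ → ℤ/2ℤ` defined by `s(x)·s(y) = z^{c(x,y)}·s(x·y)`. -/
noncomputable def coc (n : ℕ) (x y : Equiv.Perm (Fin n)) : ZMod 2 :=
  if sec n x * sec n y = sec n (x * y) then 0 else 1

/-! ### Uniqueness of the factorization -/

/-- A product of transpositions `(i k, k)` with `i k ≤ k < m` fixes `m`. -/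
theorem prod_swap_apply_of_lt {n : ℕ} {i : Fin n → Fin n} (hi : ∀ k, i k ≤ k) {m : Fin n} :
    ∀ l : List (Fin n), (∀ k ∈ l, k < m) → (l.map fun k => swap (i k) k).prod m = m
  | [], _ => rfl
  | k :: l, h => by
    have hk : k < m := h k (by simp)
    rw [List.map_cons, List.prod_cons, Perm.mul_apply,
      prod_swap_apply_of_lt hi l fun a ha => h a (by simp [ha])]
    exact swap_apply_of_ne_of_ne ((hi k).trans_lt hk).ne' hk.ne'

theorem eq_of_prod_swap_eq {n : ℕ} {i j : Fin n → Fin n} (hi : ∀ k, i k ≤ k)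
    (hj : ∀ k, j k ≤ k) (l : List (Fin n)) (hl : l.Pairwise (· < ·))
    (h : (l.map fun k => swap (i k) k).prod = (l.map fun k => swap (j k) k).prod) :
    ∀ k ∈ l, i k = j k := by
  induction l using List.reverseRecOn with
  | nil => simp
  | append_singleton l m ih =>
    rw [List.pairwise_append] at hl
    have hlt : ∀ k ∈ l, k < m := fun k hk => hl.2.2 k hk m (by simp)
    simp only [List.map_append, List.map_cons, List.map_nil, List.prod_append,
      List.prod_singleton] at h
    have him : i m = j m := by
      have key := congrArg (fun p : Perm (Fin n) => p⁻¹ m) h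
      simpa [Perm.mul_apply, Perm.inv_eq_iff_eq.2 (prod_swap_apply_of_lt hi l hlt).symm,
        Perm.inv_eq_iff_eq.2 (prod_swap_apply_of_lt hj l hlt).symm] using key
    rw [him] at h
    intro k hk
    rcases List.mem_append.1 hk with hk | hk
    · exact ih hl.1 (mul_right_cancel h) k hk
    · rw [List.mem_singleton.1 hk, him]

theorem IsFactorization.unique {n : ℕ} {x : Perm (Fin n)} {i j : Fin n → Fin n}
    (hi : IsFactorization n x i) (hj : IsFactorization n x j) : i = j :=
  funext fun k => eq_of_prod_swap_eq hi.1 hj.1 _ (List.pairwise_lt_finRange n)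
    (hi.2.symm.trans hj.2) k (List.mem_finRange k)

theorem IsFactorization.sec_eq {n : ℕ} {x : Perm (Fin n)} {i : Fin n → Fin n}
    (hi : IsFactorization n x i) :
    sec n x = ((List.finRange n).map fun k => ttil n (i k).val k.val).prod := by
  have h : ∃ i, IsFactorization n x i := ⟨i, hi⟩
  rw [sec, dif_pos h, h.choose_spec.unique hi]

/-! ### The Clifford representation -/

/-- The quadratic form `v ↦ -(∑ vᵢ²) / 2` on `ℚⁿ`. -/
noncomputable def spinForm (n : ℕ) : QuadraticForm ℚ (Fin n → ℚ) :=
  QuadraticMap.weightedSumSquares ℚ fun _ : Fin n => (-1 / 2 : ℚ)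

/-- The simple root `eᵢ - eᵢ₊₁`. -/
def simpleRoot (n : ℕ) (i : Fin (n - 1)) : Fin n → ℚ :=
  Pi.single (finL n i) 1 - Pi.single (finR n i) 1

theorem polar_spinForm {n : ℕ} (v w : Fin n → ℚ) :
    QuadraticMap.polar (spinForm n) v w = -(v ⬝ᵥ w) := by
  simp only [QuadraticMap.polar, spinForm, QuadraticMap.weightedSumSquares_apply, dotProduct,
    ← Finset.sum_sub_distrib, ← Finset.sum_neg_distrib]
  refine Finset.sum_congr rfl fun k _ => ?_
  simp only [Pi.add_apply, smul_eq_mul]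
  ring

theorem spinForm_simpleRoot {n : ℕ} (i : Fin (n - 1)) : spinForm n (simpleRoot n i) = -1 := by
  have h := polar_spinForm (simpleRoot n i) (simpleRoot n i)
  rw [QuadraticMap.polar_self] at h
  have hd : simpleRoot n i ⬝ᵥ simpleRoot n i = 2 := by
    simp [simpleRoot, finL, finR, Fin.ext_iff]
    norm_num
  rw [hd] at h
  rw [two_smul] at h
  linarith

theorem polar_simpleRoot_of_lt {n : ℕ} {i j : Fin (n - 1)} (h : 1 < |(i : ℤ) - (j : ℤ)|) :
    QuadraticMap.polar (spinForm n) (simpleRoot n i) (simpleRoot n j) = 0 := by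
  have h₁ : (i : ℕ) ≠ j := by rintro e; simp [e] at h
  have h₂ : (i : ℕ) ≠ j + 1 := by rintro e; simp [e] at h
  have h₃ : (i : ℕ) + 1 ≠ j := by rintro e; simp [← e] at h
  rw [polar_spinForm]
  simp [simpleRoot, finL, finR, Fin.ext_iff, h₁.symm, h₂.symm, h₃.symm]

theorem polar_simpleRoot_succ {n : ℕ} {i j : Fin (n - 1)} (h : (j : ℕ) = (i : ℕ) + 1) :
    QuadraticMap.polar (spinForm n) (simpleRoot n i) (simpleRoot n j) = 1 := by
  rw [polar_spinForm]
  simp [simpleRoot, finL, finR, Pi.single_apply, Fin.ext_iff, h]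
  omega

/-- The image of a simple root in the Clifford algebra. -/
noncomputable def cliffordRoot (n : ℕ) (i : Fin (n - 1)) : CliffordAlgebra (spinForm n) :=
  CliffordAlgebra.ι (spinForm n) (simpleRoot n i)

theorem cliffordRoot_mul_self {n : ℕ} (i : Fin (n - 1)) :
    cliffordRoot n i * cliffordRoot n i = -1 := by
  rw [cliffordRoot, CliffordAlgebra.ι_sq_scalar, spinForm_simpleRoot, map_neg, map_one]

theorem cliffordRoot_anticomm {n : ℕ} {i j : Fin (n - 1)} (h : 1 < |(i : ℤ) - (j : ℤ)|) :
    cliffordRoot n i * cliffordRoot n j = -(cliffordRoot n j * cliffordRoot n i) := by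
  rw [eq_neg_iff_add_eq_zero, cliffordRoot, cliffordRoot,
    CliffordAlgebra.ι_mul_ι_add_swap, polar_simpleRoot_of_lt h, map_zero]

theorem cliffordRoot_braid {n : ℕ} {i j : Fin (n - 1)} (h : (j : ℕ) = (i : ℕ) + 1) :
    cliffordRoot n i * cliffordRoot n j * cliffordRoot n i =
      cliffordRoot n j * cliffordRoot n i * cliffordRoot n j := by
  have hs : cliffordRoot n i * cliffordRoot n j + cliffordRoot n j * cliffordRoot n i = 1 := by
    rw [cliffordRoot, cliffordRoot, CliffordAlgebra.ι_mul_ι_add_swap, polar_simpleRoot_succ h,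
      map_one]
  have hi := cliffordRoot_mul_self i
  have hj := cliffordRoot_mul_self j
  generalize cliffordRoot n i = a at *
  generalize cliffordRoot n j = b at *
  calc a * b * a = (a * b + b * a) * a - b * (a * a) := by noncomm_ring
    _ = (a * b + b * a) * b - a * (b * b) := by
      rw [hs, hi, hj, one_mul, one_mul, mul_neg_one, mul_neg_one, sub_neg_eq_add,
        sub_neg_eq_add, add_comm]
    _ = b * a * b := by noncomm_ring

/-- The image of a simple root as a unit of the Clifford algebra. -/
noncomputable def cliffordUnit (n : ℕ) (i : Fin (n - 1)) : (CliffordAlgebra (spinForm n))ˣ where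
  val := cliffordRoot n i
  inv := -cliffordRoot n i
  val_inv := by rw [mul_neg, cliffordRoot_mul_self, neg_neg]
  inv_val := by rw [neg_mul, cliffordRoot_mul_self, neg_neg]

theorem lift_spinRels {n : ℕ} : ∀ r ∈ spinRels n,
    FreeGroup.lift (Sum.elim (cliffordUnit n) fun _ => -1) r = 1 := by
  rintro r ((((rfl | ⟨i, rfl⟩) | ⟨i, rfl⟩) | ⟨i, j, h, rfl⟩) | ⟨i, j, h, rfl⟩)
  · simp [zF]
  · simp [zF, tF]
  · simp only [map_mul, map_inv, mul_inv_eq_one]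
    ext
    simpa [zF, tF, cliffordUnit] using cliffordRoot_mul_self i
  · simp only [map_mul, map_inv, mul_inv_eq_one]
    ext
    simpa [zF, tF, cliffordUnit] using cliffordRoot_anticomm h
  · simp only [map_mul, map_inv, mul_inv_eq_one]
    ext
    simpa [zF, tF, cliffordUnit] using cliffordRoot_braid h

/-- The spin representation of `S̃ₙ` in the Clifford algebra, with `z` acting as `-1`. -/
noncomputable def spinRep (n : ℕ) : SpinSym n →* (CliffordAlgebra (spinForm n))ˣ :=
  PresentedGroup.toGroup lift_spinRels

theorem spinRep_tt {n : ℕ} (i : Fin (n - 1)) : spinRep n (tt n i) = cliffordUnit n i :=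
  PresentedGroup.toGroup.of lift_spinRels

theorem tt_mul_tt_ne {n : ℕ} {i j : Fin (n - 1)} (h : 1 < |(i : ℤ) - (j : ℤ)|) :
    tt n i * tt n j ≠ tt n j * tt n i := by
  intro he
  have hu : cliffordUnit n i * cliffordUnit n j = cliffordUnit n j * cliffordUnit n i := by
    simpa [spinRep_tt] using congrArg (spinRep n) he
  have hc : cliffordRoot n i * cliffordRoot n j = cliffordRoot n j * cliffordRoot n i :=
    congrArg Units.val hu
  have : Nontrivial (CliffordAlgebra (spinForm n)) :=
    (CliffordAlgebra.equivExterior (spinForm n)).toEquiv.nontrivial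
  have hunit : IsUnit (cliffordRoot n j * cliffordRoot n i) :=
    (cliffordUnit n j * cliffordUnit n i).isUnit
  have h₂ : (2 : ℚ) • (cliffordRoot n j * cliffordRoot n i) = 0 := by
    rw [two_smul]
    nth_rewrite 1 [← hc]
    rw [cliffordRoot_anticomm h, neg_add_cancel]
  exact hunit.ne_zero ((smul_eq_zero.1 h₂).resolve_left two_ne_zero)

/-! ### The values of the section on `(0 1)`, `(2 3)` and their product -/

theorem prod_map_finRange_of_eq_one {M : Type*} [Monoid M] {m : ℕ} (g : Fin (m + 4) → M)
    (h : ∀ k, k ≠ 1 → k ≠ 3 → g k = 1) :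
    ((List.finRange (m + 4)).map g).prod = g 1 * g 3 := by
  have hr : ((List.finRange m).map fun k => g k.succ.succ.succ.succ).prod = 1 := by
    refine List.prod_eq_one fun x hx => ?_
    obtain ⟨k, -, rfl⟩ := List.mem_map.1 hx
    exact h _ (Fin.ne_of_val_ne (show k.val + 4 ≠ 1 by omega))
      (Fin.ne_of_val_ne (show k.val + 4 ≠ 3 by omega))
  have h₀ : g 0 = 1 :=
    h _ (Fin.ne_of_val_ne (show 0 ≠ 1 by decide)) (Fin.ne_of_val_ne (show 0 ≠ 3 by decide))
  have h₂ : g (Fin.succ (Fin.succ 0)) = 1 :=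
    h _ (Fin.ne_of_val_ne (show 2 ≠ 1 by decide)) (Fin.ne_of_val_ne (show 2 ≠ 3 by decide))
  simp only [List.finRange_succ, List.map_cons, List.map_map, List.prod_cons, Function.comp_def,
    hr, h₀, h₂, one_mul, mul_one]
  rfl

/-- The indices of the factorization of `(a 1)(b 3)` for `a ≤ 1` and `b ≤ 3`. -/
def pairIndex {m : ℕ} (a b : Fin (m + 4)) (k : Fin (m + 4)) : Fin (m + 4) :=
  if k = 1 then a else if k = 3 then b else k

theorem pairIndex_one {m : ℕ} (a b : Fin (m + 4)) : pairIndex a b 1 = a :=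
  if_pos rfl

theorem pairIndex_three {m : ℕ} (a b : Fin (m + 4)) : pairIndex a b 3 = b :=
  (if_neg (Fin.ne_of_val_ne (show 3 ≠ 1 by decide))).trans (if_pos rfl)

theorem pairIndex_of_ne {m : ℕ} (a b : Fin (m + 4)) {k : Fin (m + 4)} (h₁ : k ≠ 1)
    (h₃ : k ≠ 3) : pairIndex a b k = k := by
  simp [pairIndex, h₁, h₃]

theorem isFactorization_pairIndex {m : ℕ} {a b : Fin (m + 4)} (ha : a ≤ 1) (hb : b ≤ 3) :
    IsFactorization (m + 4) (swap a 1 * swap b 3) (pairIndex a b) := by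
  refine ⟨fun k => ?_, ?_⟩
  · unfold pairIndex
    split_ifs with h₁ h₃
    · rwa [h₁]
    · rwa [h₃]
    · exact le_rfl
  · rw [prod_map_finRange_of_eq_one, pairIndex_one, pairIndex_three]
    intro k h₁ h₃
    rw [pairIndex_of_ne a b h₁ h₃, swap_self]
    rfl

theorem ttil_self (n k : ℕ) : ttil n k k = 1 := by
  simp [ttil, ttilCore, show k - 1 - k = 0 by omega]

theorem ttil_succ {n k : ℕ} (h : k < n - 1) : ttil n k (k + 1) = tt n ⟨k, h⟩ := by
  simp [ttil, ttilCore, ttN, h]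

theorem sec_swap_mul_swap {m : ℕ} {a b : Fin (m + 4)} (ha : a ≤ 1) (hb : b ≤ 3) :
    sec (m + 4) (swap a 1 * swap b 3) = ttil (m + 4) a 1 * ttil (m + 4) b 3 := by
  rw [(isFactorization_pairIndex ha hb).sec_eq, prod_map_finRange_of_eq_one, pairIndex_one,
    pairIndex_three]
  · rfl
  · intro k h₁ h₃
    rw [pairIndex_of_ne a b h₁ h₃, ttil_self]

theorem cocycle_nontrivial (n : ℕ) (hn : 4 ≤ n) :
    ¬ ∃ f : Equiv.Perm (Fin n) → ZMod 2,
        ∀ x y : Equiv.Perm (Fin n), coc n x y = f x + f y + f (x * y) := by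
  rintro ⟨f, hf⟩
  obtain ⟨m, rfl⟩ := Nat.exists_eq_add_of_le' hn
  have h₀ : (0 : Fin (m + 4)) ≤ 1 := Fin.zero_le _
  have h₂ : (2 : Fin (m + 4)) ≤ 3 := Fin.le_def.2 (show 2 ≤ 3 by decide)
  have t₀ : ttil (m + 4) (0 : Fin (m + 4)) 1 = tt (m + 4) ⟨0, by omega⟩ := ttil_succ _
  have t₂ : ttil (m + 4) (2 : Fin (m + 4)) 3 = tt (m + 4) ⟨2, by omega⟩ := ttil_succ _
  have t₁ : ttil (m + 4) (1 : Fin (m + 4)) 1 = 1 := ttil_self _ 1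
  have t₃ : ttil (m + 4) (3 : Fin (m + 4)) 3 = 1 := ttil_self _ 3
  have hx := sec_swap_mul_swap (m := m) h₀ le_rfl
  have hy := sec_swap_mul_swap (m := m) le_rfl h₂
  have hxy := sec_swap_mul_swap (m := m) h₀ h₂
  rw [swap_self, ← Perm.one_def, t₀, t₃, mul_one, mul_one] at hx
  rw [swap_self, ← Perm.one_def, t₁, t₂, one_mul, one_mul] at hy
  rw [t₀, t₂] at hxy
  have hcomm : swap (2 : Fin (m + 4)) 3 * swap 0 1 = swap 0 1 * swap 2 3 := by
    refine Perm.Disjoint.commute (Perm.disjoint_swap_swap ?_)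
    rw [← List.nodup_map_iff Fin.val_injective]
    exact show [2, 3, 0, 1].Nodup by decide
  have c₁ : coc (m + 4) (swap 0 1) (swap 2 3) = 0 := by
    rw [coc, hx, hy, hxy, if_pos rfl]
  have c₂ : coc (m + 4) (swap 2 3) (swap 0 1) = 1 := by
    rw [coc, hcomm, hx, hy, hxy, if_neg (tt_mul_tt_ne (by norm_num))]
  rw [hf] at c₁ c₂
  rw [hcomm, add_comm (f _), c₁] at c₂
  exact zero_ne_one c₂
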